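/- Let N = (P,T,F,Var) be a UDPN and i, f ℚ⁺-markings. Suppose there exists a ℚ-run σ with i →σ_ℚ f such that i(p,α) > 0 for every (p,α) ∈ Pre(σ) and f(p,α) > 0 for every (p,α) ∈ Post(σ). Then f is ℚ⁺-reachable from i. -/

import Mathlib

open Finset

noncomputable section
open scoped Classical

/-- An unordered data Petri net over places `P`, transitions `T`, variables `V`,
with countably infinite data domain `D = ℕ`.
`pre p t` is the function `F(p,t) : V → ℕ` and `post t p` is `F(t,p) : V → ℕ`. -/
structure UDPN (P T V : Type) where
  pre : P → T → V → ℕ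
  post : T → P → V → ℕ

/-- An X-step `(c, t, π)`: coefficient, transition and mode. -/
structure Step (T V : Type) where
  c : ℚ
  t : T
  π : V → ℕ

variable {P T V : Type} [Fintype P] [Fintype T] [Fintype V]

/-- The `P × V` rational matrix `F(•,t)`. -/
def preMat (N : UDPN P T V) (t : T) (p : P) (x : V) : ℚ := (N.pre p t x : ℚ)

/-- The displacement `Δ(t) = F(t,•) − F(•,t)` as a `P × V` rational matrix. -/
def delta (N : UDPN P T V) (t : T) (p : P) (x : V) : ℚ :=
  (N.post t p x : ℚ) - (N.pre p t x : ℚ)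

/-- `A ∘ π⁻¹`: the `P × ℕ` matrix with `(A∘π⁻¹)(p,α) = A(p,x)` if `α = π x`,
and `0` if `α` is outside the range of `π`. (For injective `π` the sum has at
most one nonzero summand.) -/
def compInv (A : P → V → ℚ) (π : V → ℕ) (p : P) (α : ℕ) : ℚ :=
  ∑ x : V, if π x = α then A p x else 0

/-- Only finitely many nonzero columns. -/
def FinCols (m : P → ℕ → ℚ) : Prop := {α : ℕ | ∃ p, m p α ≠ 0}.Finite

/-- `IsMarking pos m`: `m` is an X-marking; `pos = true` corresponds to `X = ℚ⁺`
(all entries nonnegative), `pos = false` to `X = ℚ`. -/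
def IsMarking (pos : Bool) (m : P → ℕ → ℚ) : Prop :=
  FinCols m ∧ (pos = true → ∀ p α, 0 ≤ m p α)

/-- Data values of a marking. -/
def dvalM (m : P → ℕ → ℚ) : Set ℕ := {α | ∃ p, m p α ≠ 0}

/-- A valid X-step: nonnegative coefficient and injective mode.  -/
def IsStep (s : Step T V) : Prop := 0 ≤ s.c ∧ Function.Injective s.π

/-- A valid X-run: a finite sequence of X-steps. -/
def IsRun (ρ : List (Step T V)) : Prop := ∀ s ∈ ρ, IsStep s

/-- The effect `c · (Δ(t) ∘ π⁻¹)` of a step. -/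
def stepEffect (N : UDPN P T V) (s : Step T V) (p : P) (α : ℕ) : ℚ :=
  s.c * compInv (delta N s.t) s.π p α

/-- The effect `Δ(ρ)` of a run. -/
def runEffect (N : UDPN P T V) (ρ : List (Step T V)) (p : P) (α : ℕ) : ℚ :=
  (ρ.map fun s => stepEffect N s p α).sum

/-- A step `(c,t,π)` is fireable at `m` if `m − c·(F(•,t)∘π⁻¹)` is again an
X-marking: finitely many nonzero columns and (when `pos`) nonnegative entries. -/
def stepFireable (pos : Bool) (N : UDPN P T V) (m : P → ℕ → ℚ) (s : Step T V) : Prop :=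
  FinCols (fun p α => m p α - s.c * compInv (preMat N s.t) s.π p α) ∧
  (pos = true → ∀ p α, 0 ≤ m p α - s.c * compInv (preMat N s.t) s.π p α)

/-- A run is fireable at `m` if each step is fireable at the corresponding
intermediate marking. -/
def runFireable (pos : Bool) (N : UDPN P T V) : (P → ℕ → ℚ) → List (Step T V) → Prop
  | _, [] => True
  | m, s :: ρ => stepFireable pos N m s ∧
      runFireable pos N (fun p α => m p α + stepEffect N s p α) ρ

/-- `m →ρ_X m'` : `ρ` is fireable at `m` and `m' = m + Δ(ρ)`. -/
def Reaches (pos : Bool) (N : UDPN P T V) (i : P → ℕ → ℚ) (ρ : List (Step T V))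
    (f : P → ℕ → ℚ) : Prop :=
  runFireable pos N i ρ ∧ f = fun p α => i p α + runEffect N ρ p α

/-- `f` is X-reachable from `i`. -/
def Reach (pos : Bool) (N : UDPN P T V) (i f : P → ℕ → ℚ) : Prop :=
  ∃ ρ, IsRun ρ ∧ Reaches pos N i ρ f

/-- `vars(t)`. -/
def varsOf (N : UDPN P T V) (t : T) : Set V :=
  {x | ∃ p, N.pre p t x ≠ 0 ∨ N.post t p x ≠ 0}

/-- `maxvars(N) = max_{t ∈ T} |vars(t)|` (0 if `T` is empty). -/
def maxvars (N : UDPN P T V) : ℕ :=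
  Finset.univ.sup fun t : T => (varsOf N t).ncard

/-- `dval(ρ)`: the data values used by a run. -/
def runDval (N : UDPN P T V) (ρ : List (Step T V)) : Set ℕ :=
  {α | ∃ s ∈ ρ, ∃ x ∈ varsOf N s.t, s.π x = α}
/-- For `α ∈ E`: the least element of `{β ∈ E | β > α}` if nonempty, else `min E`. -/
def nextE (E : Finset ℕ) (α : ℕ) : ℕ :=
  if h : (E.filter fun β => α < β).Nonempty then (E.filter fun β => α < β).min' h
  else if h' : E.Nonempty then E.min' h' else 0

/-- The inverse of `nextE` on `E`: the greatest element of `{γ ∈ E | γ < β}` if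
nonempty, else `max E`. -/
def prevE (E : Finset ℕ) (β : ℕ) : ℕ :=
  if h : (E.filter fun γ => γ < β).Nonempty then (E.filter fun γ => γ < β).max' h
  else if h' : E.Nonempty then E.max' h' else 0

/-- The mode `π'` of `rot(E,ω)`, characterized by: the permutation matrix `P'` of
`π'` satisfies `P'(•,α) = P(•,α)` for `α ∉ E` and `P'(•,α) = P(•, nextE α)` for
`α ∈ E` (i.e. `π' x = α ↔ π x = nextE α` for `α ∈ E`). -/
def rotMode {V : Type} (E : Finset ℕ) (π : V → ℕ) (x : V) : ℕ :=
  if π x ∈ E then prevE E (π x) else π x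

/-- `rot(E,ω)`. -/
def rotStep (E : Finset ℕ) (s : Step T V) : Step T V := ⟨s.c, s.t, rotMode E s.π⟩

/-- The uniformization `U(E,ω)`: the concatenation
`rot^0(E, ω/|E|) ⋯ rot^{|E|−1}(E, ω/|E|)`. -/
def uniformize (E : Finset ℕ) (s : Step T V) : List (Step T V) :=
  (List.range E.card).map fun k => (rotStep E)^[k] ⟨s.c / (E.card : ℚ), s.t, s.π⟩

/-- Column `α` of `Δ(t)·P_π` is zero. -/
def zeroCol (N : UDPN P T V) (s : Step T V) (α : ℕ) : Prop :=
  ∀ p, compInv (delta N s.t) s.π p α = 0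

/-- The transposition of the data values `α` and `β`. -/
def swapVal (α β γ : ℕ) : ℕ := if γ = α then β else if γ = β then α else γ

/-- `R(α,E,ω)`: if column `α` of `Δ(t)·P_π` is zero then `ω` itself; otherwise the
step whose permutation matrix is obtained from `P_π` by exchanging columns `α` and
`β`, where `β` is the least datum in `E` whose column of `Δ(t)·P_π` is zero. -/
def replaceStep (N : UDPN P T V) (α : ℕ) (E : Finset ℕ) (s : Step T V) : Step T V :=
  if zeroCol N s α then s
  else if h : (E.filter fun β => zeroCol N s β).Nonempty then
    ⟨s.c, s.t, fun x => swapVal α ((E.filter fun β => zeroCol N s β).min' h) (s.π x)⟩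
  else s

/-- `dec(E,α,σ)`: the concatenation `U(E,R(α,E,σ(1))) ⋯ U(E,R(α,E,σ(n)))`. -/
def decRun (N : UDPN P T V) (α : ℕ) (E : Finset ℕ) (σ : List (Step T V)) :
    List (Step T V) :=
  σ.flatMap fun s => uniformize E (replaceStep N α E s)

/-- A histogram of order `q`: a `V × ℕ` matrix with nonnegative rational entries
and finitely many nonzero columns, every row summing to `q` and every column
summing to at most `q`. -/
def IsHistogram (H : V → ℕ → ℚ) (q : ℚ) : Prop :=
  0 ≤ q ∧ (∀ x α, 0 ≤ H x α) ∧ ({α | ∃ x, H x α ≠ 0}).Finite ∧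
  (∀ x, ∑ᶠ α, H x α = q) ∧ (∀ α, ∑ x : V, H x α ≤ q)

/-- `col(H)`: the nonzero columns of `H`. -/
def colH (H : V → ℕ → ℚ) : Set ℕ := {α | ∃ x, H x α ≠ 0}

/-- The permutation matrix `P_π` of a mode `π`. -/
def permMat {V : Type} (π : V → ℕ) (x : V) (α : ℕ) : ℚ := if π x = α then 1 else 0

/-- `Pre(ρ)`: pairs `(p,α)` of tokens consumed by the run `ρ`. -/
def preSet (N : UDPN P T V) (ρ : List (Step T V)) : Set (P × ℕ) :=
  {pa | ∃ s ∈ ρ, ∃ x, 0 < N.pre pa.1 s.t x ∧ s.π x = pa.2}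

/-- `Post(ρ)`: pairs `(p,α)` of tokens produced by the run `ρ`. -/
def postSet (N : UDPN P T V) (ρ : List (Step T V)) : Set (P × ℕ) :=
  {pa | ∃ s ∈ ρ, ∃ x, 0 < N.post s.t pa.1 x ∧ s.π x = pa.2}

/-- A loop-less UDPN: `PrePlace(t) ∩ PostPlace(t) = ∅` for every transition. -/
def IsLoopless (N : UDPN P T V) : Prop :=
  ∀ t : T, ¬ ∃ p : P, (∃ x, 0 < N.pre p t x) ∧ (∃ x, 0 < N.post t p x)

set_option linter.unusedSectionVars false

/-- The amount consumed by a step at the cell `(p, α)`. -/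
def stepConsumption (N : UDPN P T V) (s : Step T V) (p : P) (α : ℕ) : ℚ :=
  s.c * compInv (preMat N s.t) s.π p α

/-- The amount produced by a step at the cell `(p, α)`. -/
def stepProduction (N : UDPN P T V) (s : Step T V) (p : P) (α : ℕ) : ℚ :=
  s.c * compInv (fun p x => (N.post s.t p x : ℚ)) s.π p α

/-- The total amount consumed by a run at the cell `(p, α)`. -/
def runConsumption (N : UDPN P T V) (ρ : List (Step T V)) (p : P) (α : ℕ) : ℚ :=
  (ρ.map fun s => stepConsumption N s p α).sum

/-- The total amount produced by a run at the cell `(p, α)`. -/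
def runProduction (N : UDPN P T V) (ρ : List (Step T V)) (p : P) (α : ℕ) : ℚ :=
  (ρ.map fun s => stepProduction N s p α).sum

/-- Multiply every coefficient of a run by `q`. -/
def scaleRun (q : ℚ) (ρ : List (Step T V)) : List (Step T V) :=
  ρ.map fun s => ⟨q * s.c, s.t, s.π⟩

lemma compInv_nonneg {A : P → V → ℚ} (hA : ∀ p x, 0 ≤ A p x) (π : V → ℕ) (p : P) (α : ℕ) :
    0 ≤ compInv A π p α :=
  Finset.sum_nonneg fun x _ => by split_ifs <;> simp [hA]

lemma exists_of_compInv_ne_zero {A : P → V → ℚ} {π : V → ℕ} {p : P} {α : ℕ}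
    (h : compInv A π p α ≠ 0) : ∃ x, A p x ≠ 0 ∧ π x = α := by
  obtain ⟨x, -, hx⟩ := Finset.exists_ne_zero_of_sum_ne_zero h
  obtain ⟨hπ, hx⟩ := ite_ne_right_iff.1 hx
  exact ⟨x, hx, hπ⟩

lemma stepConsumption_nonneg (N : UDPN P T V) {s : Step T V} (hs : IsStep s) (p : P) (α : ℕ) :
    0 ≤ stepConsumption N s p α :=
  mul_nonneg hs.1 (compInv_nonneg (fun _ _ => Nat.cast_nonneg _) _ _ _)

lemma stepProduction_nonneg (N : UDPN P T V) {s : Step T V} (hs : IsStep s) (p : P) (α : ℕ) :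
    0 ≤ stepProduction N s p α :=
  mul_nonneg hs.1 (compInv_nonneg (fun _ _ => Nat.cast_nonneg _) _ _ _)

lemma runConsumption_nonneg (N : UDPN P T V) {ρ : List (Step T V)} (hρ : IsRun ρ) (p : P)
    (α : ℕ) : 0 ≤ runConsumption N ρ p α :=
  List.sum_nonneg <| by
    simp only [List.mem_map]
    rintro _ ⟨s, hs, rfl⟩
    exact stepConsumption_nonneg N (hρ s hs) p α

lemma runProduction_nonneg (N : UDPN P T V) {ρ : List (Step T V)} (hρ : IsRun ρ) (p : P)
    (α : ℕ) : 0 ≤ runProduction N ρ p α :=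
  List.sum_nonneg <| by
    simp only [List.mem_map]
    rintro _ ⟨s, hs, rfl⟩
    exact stepProduction_nonneg N (hρ s hs) p α

lemma stepEffect_eq (N : UDPN P T V) (s : Step T V) (p : P) (α : ℕ) :
    stepEffect N s p α = stepProduction N s p α - stepConsumption N s p α := by
  simp only [stepEffect, stepProduction, stepConsumption, compInv, delta, preMat]
  rw [← mul_sub, ← Finset.sum_sub_distrib]
  congr 1
  refine Finset.sum_congr rfl fun x _ => ?_
  split_ifs <;> simp

lemma runEffect_eq (N : UDPN P T V) (ρ : List (Step T V)) (p : P) (α : ℕ) :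
    runEffect N ρ p α = runProduction N ρ p α - runConsumption N ρ p α := by
  induction ρ with
  | nil => simp [runEffect, runProduction, runConsumption]
  | cons s ρ ih =>
    simp only [runEffect, runProduction, runConsumption, List.map_cons, List.sum_cons,
      stepEffect_eq] at ih ⊢
    linarith

lemma exists_mem_of_sum_map_ne_zero {ι : Type*} {l : List ι} {g : ι → ℚ}
    (h : (l.map g).sum ≠ 0) : ∃ s ∈ l, g s ≠ 0 := by
  contrapose! h
  refine List.sum_eq_zero ?_
  simp only [List.mem_map]
  rintro _ ⟨s, hs, rfl⟩
  exact h s hs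

lemma mem_preSet_of_runConsumption_ne_zero {N : UDPN P T V} {ρ : List (Step T V)} {p : P}
    {α : ℕ} (h : runConsumption N ρ p α ≠ 0) : (p, α) ∈ preSet N ρ := by
  obtain ⟨s, hs, hne⟩ := exists_mem_of_sum_map_ne_zero h
  obtain ⟨x, hx, hπ⟩ := exists_of_compInv_ne_zero (right_ne_zero_of_mul hne)
  exact ⟨s, hs, x, Nat.pos_of_ne_zero (Nat.cast_ne_zero.1 hx), hπ⟩

lemma mem_postSet_of_runProduction_ne_zero {N : UDPN P T V} {ρ : List (Step T V)} {p : P}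
    {α : ℕ} (h : runProduction N ρ p α ≠ 0) : (p, α) ∈ postSet N ρ := by
  obtain ⟨s, hs, hne⟩ := exists_mem_of_sum_map_ne_zero h
  obtain ⟨x, hx, hπ⟩ := exists_of_compInv_ne_zero (right_ne_zero_of_mul hne)
  exact ⟨s, hs, x, Nat.pos_of_ne_zero (Nat.cast_ne_zero.1 hx), hπ⟩

lemma preSet_finite (N : UDPN P T V) (ρ : List (Step T V)) : (preSet N ρ).Finite := by
  refine ((Set.finite_univ (α := P)).prod
    (ρ.finite_toSet.biUnion fun s _ => Set.finite_range s.π)).subset ?_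
  rintro ⟨p, α⟩ ⟨s, hs, x, -, hx⟩
  exact ⟨trivial, Set.mem_biUnion hs ⟨x, hx⟩⟩

lemma finCols_compInv (A : P → V → ℚ) (π : V → ℕ) : FinCols (compInv A π) := by
  refine (Set.finite_range π).subset ?_
  rintro α ⟨p, hp⟩
  obtain ⟨x, -, hx⟩ := exists_of_compInv_ne_zero hp
  exact ⟨x, hx⟩

lemma FinCols.linear_comb {m m' : P → ℕ → ℚ} (hm : FinCols m) (hm' : FinCols m') (a b : ℚ) :
    FinCols fun p α => a * m p α + b * m' p α := by
  refine (hm.union hm').subset ?_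
  rintro α ⟨p, hp⟩
  by_contra h
  simp only [Set.mem_union, Set.mem_ofPred_eq, not_or, not_exists, not_not] at h
  exact hp (by simp [h.1 p, h.2 p])

/-- A run is `ℚ⁺`-fireable at every marking that covers its total consumption. -/
lemma runFireable_of_runConsumption_le (N : UDPN P T V) {ρ : List (Step T V)} (hρ : IsRun ρ)
    {m : P → ℕ → ℚ} (hm : FinCols m) (h : ∀ p α, runConsumption N ρ p α ≤ m p α) :
    runFireable true N m ρ := by
  induction ρ generalizing m with
  | nil => trivial
  | cons s ρ ih =>
    have hs : IsStep s := hρ s List.mem_cons_self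
    have hρ' : IsRun ρ := fun s' hs' => hρ s' (List.mem_cons_of_mem _ hs')
    have hle : ∀ p α, stepConsumption N s p α + runConsumption N ρ p α ≤ m p α := fun p α => by
      simpa [runConsumption] using h p α
    refine ⟨⟨?_, fun _ p α => ?_⟩, ih hρ' ?_ fun p α => ?_⟩
    · convert hm.linear_comb (finCols_compInv (preMat N s.t) s.π) 1 (-s.c) using 3
      ring
    · have := hle p α
      have := runConsumption_nonneg N hρ' p α
      simp only [stepConsumption] at *
      linarith
    · convert hm.linear_comb (finCols_compInv (delta N s.t) s.π) 1 s.c using 3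
      simp [stepEffect]
    · have := hle p α
      have := stepProduction_nonneg N hs p α
      rw [stepEffect_eq]
      linarith

lemma runFireable_append (pos : Bool) (N : UDPN P T V) (ρ ρ' : List (Step T V))
    (m : P → ℕ → ℚ) (h : runFireable pos N m ρ)
    (h' : runFireable pos N (fun p α => m p α + runEffect N ρ p α) ρ') :
    runFireable pos N m (ρ ++ ρ') := by
  induction ρ generalizing m with
  | nil => simpa [runEffect] using h'
  | cons s ρ ih =>
    refine ⟨h.1, ih _ h.2 ?_⟩
    simpa [runEffect, add_assoc] using h'

lemma Reach.trans {pos : Bool} {N : UDPN P T V} {a b c : P → ℕ → ℚ} (hab : Reach pos N a b)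
    (hbc : Reach pos N b c) : Reach pos N a c := by
  obtain ⟨ρ, hρ, hfire, rfl⟩ := hab
  obtain ⟨ρ', hρ', hfire', rfl⟩ := hbc
  refine ⟨ρ ++ ρ', fun s hs => ?_, runFireable_append pos N ρ ρ' a hfire hfire', ?_⟩
  · exact (List.mem_append.1 hs).elim (hρ s) (hρ' s)
  · simp [runEffect, add_assoc]

lemma isRun_scaleRun {q : ℚ} (hq : 0 ≤ q) {ρ : List (Step T V)} (hρ : IsRun ρ) :
    IsRun (scaleRun q ρ) := by
  intro s hs
  obtain ⟨s', hs', rfl⟩ := List.mem_map.1 hs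
  exact ⟨mul_nonneg hq (hρ s' hs').1, (hρ s' hs').2⟩

lemma runConsumption_scaleRun (N : UDPN P T V) (q : ℚ) (ρ : List (Step T V)) (p : P) (α : ℕ) :
    runConsumption N (scaleRun q ρ) p α = q * runConsumption N ρ p α := by
  simp [runConsumption, scaleRun, stepConsumption, Function.comp_def, mul_assoc,
    List.sum_map_mul_left]

lemma runEffect_scaleRun (N : UDPN P T V) (q : ℚ) (ρ : List (Step T V)) (p : P) (α : ℕ) :
    runEffect N (scaleRun q ρ) p α = q * runEffect N ρ p α := by
  simp [runEffect, scaleRun, stepEffect, Function.comp_def, mul_assoc,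
    List.sum_map_mul_left]

/-- On the segment from `i` to `i + g - c`, sampled at multiples of `1 / n` with `n` large, each
sample other than the endpoint covers a consumption of `c / n`. -/
lemma eventually_div_le_segment {i f g c : ℚ} (hi : 0 < i) (hf : 0 ≤ f) (hc : 0 ≤ c)
    (hfe : f = i + (g - c)) (hpos : g ≠ 0 → 0 < f) :
    ∀ᶠ n : ℕ in Filter.atTop, ∀ k : ℕ, k < n →
      (1 / n : ℚ) * c ≤ (1 - k / n : ℚ) * i + (k / n : ℚ) * f := by
  by_cases hg : g = 0
  · refine Filter.Eventually.of_forall fun n k hk => ?_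
    have hn : (0 : ℚ) < n := by exact_mod_cast (Nat.zero_le k).trans_lt hk
    have hk' : (k : ℚ) + 1 ≤ n := by exact_mod_cast hk
    have hkn : (1 / n : ℚ) ≤ 1 - k / n := by
      rw [one_sub_div hn.ne']
      gcongr
      linarith
    have hk0 : (0 : ℚ) ≤ k / n := by positivity
    have hci : c ≤ i := by linarith
    have hn0 : (0 : ℚ) ≤ 1 / n := by positivity
    have := mul_le_mul hkn hci hc (hn0.trans hkn)
    have := mul_nonneg hk0 hf
    linarith
  · have hd : 0 < min i f := lt_min hi (hpos hg)
    obtain ⟨M, hM⟩ := exists_nat_gt (c / min i f)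
    filter_upwards [Filter.eventually_ge_atTop M] with n hn k hk
    have hn0 : (0 : ℚ) < n := by exact_mod_cast (Nat.zero_le k).trans_lt hk
    have hMn : (M : ℚ) ≤ n := by exact_mod_cast hn
    have hk1 : (k / n : ℚ) ≤ 1 := (div_le_one hn0).2 (by exact_mod_cast hk.le)
    have hk0 : (0 : ℚ) ≤ k / n := by positivity
    have hcn : (1 / n : ℚ) * c ≤ min i f := by
      rw [one_div_mul_eq_div, div_le_iff₀ hn0, ← div_le_iff₀' hd]
      exact hM.le.trans hMn
    have := mul_le_mul_of_nonneg_left (min_le_left i f) (sub_nonneg.2 hk1)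
    have := mul_le_mul_of_nonneg_left (min_le_right i f) hk0
    linarith

/-- If there is a ℚ-run `σ` with `i →σ_ℚ f` where `i` is
positive on `Pre(σ)` and `f` is positive on `Post(σ)`, then `f` is ℚ⁺-reachable
from `i`. -/
theorem q_run_gives_qplus_reach
    (N : UDPN P T V) (i f : P → ℕ → ℚ)
    (hi : IsMarking true i) (hf : IsMarking true f)
    (σ : List (Step T V)) (hσ : IsRun σ) (hσr : Reaches false N i σ f)
    (hpre : ∀ pa ∈ preSet N σ, 0 < i pa.1 pa.2)
    (hpost : ∀ pa ∈ postSet N σ, 0 < f pa.1 pa.2) :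
    Reach true N i f := by
  have hi0 : ∀ p α, 0 ≤ i p α := hi.2 rfl
  have hf0 : ∀ p α, 0 ≤ f p α := hf.2 rfl
  have hfe : ∀ p α, f p α = i p α + runEffect N σ p α := fun p α => congrFun₂ hσr.2 p α
  have hev : ∀ᶠ n : ℕ in Filter.atTop, ∀ pa ∈ preSet N σ, ∀ k : ℕ, k < n →
      (1 / n : ℚ) * runConsumption N σ pa.1 pa.2 ≤
        (1 - k / n : ℚ) * i pa.1 pa.2 + (k / n : ℚ) * f pa.1 pa.2 :=
    (Filter.eventually_all_finite (preSet_finite N σ)).2 fun pa hpa =>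
      eventually_div_le_segment (hpre pa hpa) (hf0 _ _) (runConsumption_nonneg N hσ _ _)
        (by rw [hfe, runEffect_eq])
        fun h => hpost pa (mem_postSet_of_runProduction_ne_zero h)
  obtain ⟨n, hn, hn0⟩ := (hev.and (Filter.eventually_gt_atTop 0)).exists
  have hn0' : (0 : ℚ) < n := by exact_mod_cast hn0
  let seg : ℕ → P → ℕ → ℚ := fun k p α => (1 - k / n : ℚ) * i p α + (k / n : ℚ) * f p α
  have hstep : ∀ k < n, Reach true N (seg k) (seg (k + 1)) := by
    intro k hk
    have hrun : IsRun (scaleRun (1 / n : ℚ) σ) := isRun_scaleRun (by positivity) hσ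
    refine ⟨_, hrun, runFireable_of_runConsumption_le N hrun
      (hi.1.linear_comb hf.1 _ _) fun p α => ?_, ?_⟩
    · rw [runConsumption_scaleRun]
      by_cases hc : runConsumption N σ p α = 0
      · have hk1 : (k / n : ℚ) ≤ 1 := (div_le_one hn0').2 (by exact_mod_cast hk.le)
        rw [hc, mul_zero]
        exact add_nonneg (mul_nonneg (sub_nonneg.2 hk1) (hi0 p α))
          (mul_nonneg (by positivity) (hf0 p α))
      · exact hn (p, α) (mem_preSet_of_runConsumption_ne_zero hc) k hk
    · funext p α
      simp only [seg, runEffect_scaleRun, hfe]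
      push_cast
      ring
  have hreach : ∀ k ≤ n, Reach true N (seg 0) (seg k) := by
    intro k
    induction k with
    | zero => exact fun _ => ⟨[], by simp [IsRun], trivial, by simp [runEffect]⟩
    | succ k ih => exact fun hk => (ih (by omega)).trans (hstep k hk)
  have h0 : seg 0 = i := by simp [seg]
  have h1 : seg n = f := by simp [seg, hn0'.ne']
  simpa only [h0, h1] using hreach n le_rfl
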